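/- Let d, k, T be positive integers with T ≥ 3 and kT ≤ d, A* ∈ ℝ^{d×d}, and U_t* ∈ ℝ^{d×k} for t = 1,…,T+1, where U_1*,…,U_T* satisfy the task-diversity assumption. Suppose Â ∈ ℝ^{d×d} and Û_1,…,Û_T ∈ ℝ^{d×k} satisfy 𝓛(Â, Û_1,…,Û_T) = 0, where 𝓛 is the Meta-LoRA loss over tasks 1,…,T. Then there exist matrices U, V ∈ ℝ^{d×k} such that 𝓛_Test(U, V; Â) = (1/2)·‖A* + U_{T+1}*(U_{T+1}*)ᵀ − Â − U Vᵀ‖_F² = 0. -/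

import Mathlib

open Matrix BigOperators

noncomputable section

/-- Squared Frobenius norm of a real matrix. -/
def frobSq {m n : Type*} [Fintype m] [Fintype n] (M : Matrix m n ℝ) : ℝ :=
  ∑ i, ∑ j, (M i j) ^ 2

theorem aux_frobSq_zero {m n : Type*} [Fintype m] [Fintype n] (M : Matrix m n ℝ)
    (h : frobSq M = 0) : M = 0 := by
  have h0 := (Finset.sum_eq_zero_iff_of_nonneg
    (fun i _ => Finset.sum_nonneg (fun j _ => sq_nonneg (M i j)))).1 h
  ext i j
  have h1 := (Finset.sum_eq_zero_iff_of_nonneg (fun j _ => sq_nonneg (M i j))).1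
    (h0 i (Finset.mem_univ _))
  exact pow_eq_zero_iff (two_ne_zero) |>.1 (h1 j (Finset.mem_univ _))

theorem aux_frobSq_nonneg {m n : Type*} [Fintype m] [Fintype n] (M : Matrix m n ℝ) :
    0 ≤ frobSq M :=
  Finset.sum_nonneg (fun i _ => Finset.sum_nonneg (fun j _ => sq_nonneg _))

theorem aux_surj {d k T : ℕ} (P : Fin T → Matrix (Fin d) (Fin k) ℝ)
    (hdiv : (Matrix.of fun i (p : Fin T × Fin k) => P p.1 i p.2).rank = k * T)
    (y : Fin T → Fin k → ℝ) : ∃ x : Fin d → ℝ, ∀ t, (P t)ᵀ *ᵥ x = y t := by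
  set G : Matrix (Fin d) (Fin T × Fin k) ℝ := Matrix.of fun i p => P p.1 i p.2 with hG
  have h1 : Gᵀ.rank = k * T := by rw [Matrix.rank_transpose, hdiv]
  have h2 : LinearMap.range (Gᵀ.mulVecLin) = ⊤ := by
    apply Submodule.eq_top_of_finrank_eq
    have : Module.finrank ℝ (LinearMap.range (Gᵀ.mulVecLin)) = k * T := h1
    rw [this]
    simp [mul_comm]
  obtain ⟨x, hx⟩ := LinearMap.range_eq_top.1 h2 (fun p => y p.1 p.2)
  refine ⟨x, fun t => ?_⟩
  ext j
  have := congrFun hx (t, j)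
  exact this

theorem aux_inj {d k T : ℕ} (P : Fin T → Matrix (Fin d) (Fin k) ℝ)
    (hs : ∀ y : Fin T → Fin k → ℝ, ∃ x : Fin d → ℝ, ∀ t, (P t)ᵀ *ᵥ x = y t)
    (s t : Fin T) (hst : s ≠ t) (a b : Fin k → ℝ) (h : P s *ᵥ a = P t *ᵥ b) : a = 0 := by
  obtain ⟨x, hx⟩ := hs (Function.update 0 s a)
  have h1 : x ⬝ᵥ (P s *ᵥ a) = a ⬝ᵥ a := by
    rw [Matrix.dotProduct_mulVec, ← Matrix.mulVec_transpose, hx]; simp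
  have h2 : x ⬝ᵥ (P t *ᵥ b) = 0 := by
    rw [Matrix.dotProduct_mulVec, ← Matrix.mulVec_transpose, hx]; simp [hst.symm]
  rw [h, h2] at h1
  exact dotProduct_self_eq_zero.1 h1.symm

theorem aux_ker {d k T : ℕ} (P W : Fin T → Matrix (Fin d) (Fin k) ℝ)
    (C : Matrix (Fin d) (Fin d) ℝ)
    (hs : ∀ y : Fin T → Fin k → ℝ, ∃ x : Fin d → ℝ, ∀ t, (P t)ᵀ *ᵥ x = y t)
    (hC : ∀ t, C + P t * (P t)ᵀ = W t * (W t)ᵀ)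
    (s t : Fin T) (hst : s ≠ t) (x : Fin d → ℝ)
    (h1 : (P s)ᵀ *ᵥ x = 0) (h2 : (P t)ᵀ *ᵥ x = 0) : C *ᵥ x = 0 := by
  have hv : ∀ r z, C *ᵥ z + P r *ᵥ ((P r)ᵀ *ᵥ z) = W r *ᵥ ((W r)ᵀ *ᵥ z) := by
    intro r z
    rw [Matrix.mulVec_mulVec, Matrix.mulVec_mulVec, ← hC, Matrix.add_mulVec]
  let M : (Fin d → ℝ) →ₗ[ℝ] (Fin k → ℝ) × (Fin k → ℝ) :=
    (P s)ᵀ.mulVecLin.prod (P t)ᵀ.mulVecLin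
  let N : (Fin d → ℝ) →ₗ[ℝ] (Fin k → ℝ) × (Fin k → ℝ) :=
    (W s)ᵀ.mulVecLin.prod (W t)ᵀ.mulVecLin
  have hM : LinearMap.range M = ⊤ := by
    rw [LinearMap.range_eq_top]
    rintro ⟨a, b⟩
    obtain ⟨z, hz⟩ := hs (Function.update (Function.update 0 t b) s a)
    refine ⟨z, ?_⟩
    exact Prod.ext ((hz s).trans (by simp)) ((hz t).trans (by simp [hst.symm]))
  have hle : LinearMap.ker N ≤ LinearMap.ker M := by
    intro z hz
    have hz : (W s)ᵀ *ᵥ z = 0 ∧ (W t)ᵀ *ᵥ z = 0 := Prod.ext_iff.1 (LinearMap.mem_ker.1 hz)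
    have e1 := hv s z
    have e2 := hv t z
    rw [hz.1, Matrix.mulVec_zero] at e1
    rw [hz.2, Matrix.mulVec_zero] at e2
    have e3 : P s *ᵥ ((P s)ᵀ *ᵥ z) = P t *ᵥ ((P t)ᵀ *ᵥ z) :=
      add_left_cancel (e1.trans e2.symm)
    exact LinearMap.mem_ker.2
      (Prod.ext (aux_inj P hs s t hst _ _ e3) (aux_inj P hs t s hst.symm _ _ e3.symm))
  have heq : LinearMap.ker N = LinearMap.ker M := by
    apply Submodule.eq_of_le_of_finrank_le hle
    have r1 := LinearMap.finrank_range_add_finrank_ker M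
    have r2 := LinearMap.finrank_range_add_finrank_ker N
    have r3 := Submodule.finrank_le (LinearMap.range N)
    rw [hM, finrank_top] at r1
    omega
  have hx : x ∈ LinearMap.ker M := LinearMap.mem_ker.2 (Prod.ext h1 h2)
  rw [← heq] at hx
  have hx : (W s)ᵀ *ᵥ x = 0 ∧ (W t)ᵀ *ᵥ x = 0 := Prod.ext_iff.1 (LinearMap.mem_ker.1 hx)
  have e := hv s x
  rw [hx.1, h1] at e
  simpa using e

theorem aux_C {d k T : ℕ} (hT : 3 ≤ T) (P W : Fin T → Matrix (Fin d) (Fin k) ℝ)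
    (C : Matrix (Fin d) (Fin d) ℝ)
    (hs : ∀ y : Fin T → Fin k → ℝ, ∃ x : Fin d → ℝ, ∀ t, (P t)ᵀ *ᵥ x = y t)
    (hC : ∀ t, C + P t * (P t)ᵀ = W t * (W t)ᵀ) : C = 0 := by
  have K := aux_ker P W C hs hC
  let a : Fin T := ⟨0, by omega⟩
  let b : Fin T := ⟨1, by omega⟩
  let c : Fin T := ⟨2, by omega⟩
  have hab : a ≠ b := by simp [a, b]
  have hac : a ≠ c := by simp [a, c]
  have hbc : b ≠ c := by simp [b, c]
  apply Matrix.ext_of_mulVec_single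
  intro i
  generalize (Pi.single i 1 : Fin d → ℝ) = x
  obtain ⟨x1, hx1⟩ := hs (Function.update 0 a ((P a)ᵀ *ᵥ x))
  obtain ⟨x2, hx2⟩ := hs (Function.update 0 b ((P b)ᵀ *ᵥ x))
  have e1 : C *ᵥ x1 = 0 := K b c hbc x1 (by simp [hx1, hab.symm]) (by simp [hx1, hac.symm])
  have e2 : C *ᵥ x2 = 0 := K a c hac x2 (by simp [hx2, hab]) (by simp [hx2, hbc.symm])
  have e3 : C *ᵥ (x - x1 - x2) = 0 := K a b hab _
    (by simp [Matrix.mulVec_sub, hx1, hx2, hab]) (by simp [Matrix.mulVec_sub, hx1, hx2, hab.symm])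
  rw [Matrix.mulVec_sub, Matrix.mulVec_sub, e1, e2] at e3
  simpa using e3

/-- Corollary 3: with `T ≥ 3` diverse retraining tasks, any zero of the Meta-LoRA loss
admits a rank-`k` adapter achieving zero test loss on the held-out task `T+1`. -/
theorem metaLoRA_rankk_adapter_zero_test_loss
    (d k T : ℕ) (hd : 0 < d) (hk : 0 < k) (hT : 3 ≤ T) (hkT : k * T ≤ d)
    (Astar : Matrix (Fin d) (Fin d) ℝ)
    (Ustar : Fin (T + 1) → Matrix (Fin d) (Fin k) ℝ)
    (hdiv : (Matrix.of fun i (p : Fin T × Fin k) => Ustar p.1.castSucc i p.2).rank = k * T)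
    (Ahat : Matrix (Fin d) (Fin d) ℝ)
    (Uhat : Fin T → Matrix (Fin d) (Fin k) ℝ)
    (hloss : (1 / 2) * ∑ t : Fin T, frobSq
        (Astar + Ustar t.castSucc * (Ustar t.castSucc)ᵀ - Ahat - Uhat t * (Uhat t)ᵀ) = 0) :
    ∃ U V : Matrix (Fin d) (Fin k) ℝ,
      (1 / 2) * frobSq
        (Astar + Ustar (Fin.last T) * (Ustar (Fin.last T))ᵀ - Ahat - U * Vᵀ) = 0 := by
  have hC : Astar - Ahat = 0 := by
    apply aux_C hT (fun t => Ustar t.castSucc) Uhat _ (aux_surj _ hdiv)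
    intro t
    have h0 : ∑ t : Fin T, frobSq
        (Astar + Ustar t.castSucc * (Ustar t.castSucc)ᵀ - Ahat - Uhat t * (Uhat t)ᵀ) = 0 := by
      linarith
    rw [Finset.sum_eq_zero_iff_of_nonneg (fun t _ => aux_frobSq_nonneg _)] at h0
    have h1 := aux_frobSq_zero _ (h0 t (Finset.mem_univ _))
    rw [sub_eq_zero] at h1
    rw [← h1]
    abel
  refine ⟨Ustar (Fin.last T), Ustar (Fin.last T), ?_⟩
  rw [sub_eq_zero.1 hC]
  simp [frobSq]
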